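/- arXiv:1411.6354 — 5 statements merged into one kernel-verified Lean document; each statement's English description precedes it below -/
import Mathlib

section
/- Let w be a bounded weight structure on a triangulated category C and let D be a full triangulated subcategory of C such that w restricts to D. Let l : C → C/D be the Verdier quotient functor and let w_{C/D} denote the induced weight structure on C/D (given by the Karoubi-closures of l(C_{w≤0}) and l(C_{w≥0})). If X is an object of C with l(X) ∈ (C/D)_{w_{C/D}≥0}, then there is a distinguished triangle d → X → c → d[1] in C with c ∈ C_{w≥0} and d an object of D lying in C_{w≤−1}. -/
/-!
Let `D` be the full subcategory with class of objects `P`. A morphism of `C` dies in `C/D` exactly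
when it factors through an object of `D`. A fraction from `C_{w≤i}` to `C_{w≥j}`, where `i < j`,
has as target an extension of an object of `C_{w≥j}` by an object of `D`, so it dies in `C/D`:
orthogonality survives in the quotient.

Suppose now that `X ∈ C_{w≥i}` and that `L(X)` has weights `≥ i + 1`. The truncation
`a : w_{≤i}X → X` dies in `C/D`, hence factors through an object of `D`. By orthogonality in `C`
this object can be truncated within `D` to be pure of weight `i`, and the cone of its map to `X`
lies in `C_{w≥i+1}`. Repeating this with the cone in place of `X` raises the weights one at a time,
and the successive objects of `D` assemble by extensions.

As no octahedral axiom is assumed, membership of a cone in `C_{w≥i+1}` is read off from the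
Hom groups out of `C_{w≤i}`, and cones of morphisms of triangles are handled by the five lemma.
-/

open CategoryTheory CategoryTheory.Limits CategoryTheory.Pretriangulated

namespace CWH

/-- `X` is a retract of `Y`. -/
def IsRetract {C : Type*} [Category C] (X Y : C) : Prop :=
  ∃ (i : X ⟶ Y) (r : Y ⟶ X), i ≫ r = 𝟙 X

/-- The Karoubi-closure of a class of objects: all retracts of its objects. -/
def retractClosure {C : Type*} [Category C] (S : Set C) : Set C :=
  {X : C | ∃ Y ∈ S, IsRetract X Y}

variable (C : Type*) [Category C] [HasZeroObject C] [HasShift C ℤ]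
  [Preadditive C] [∀ n : ℤ, (shiftFunctor C n).Additive] [Pretriangulated C]

/-- A weight structure on a (pre)triangulated category (homological convention):
a pair of retract-closed classes `LE = C_{w≤0}` and `GE = C_{w≥0}` such that
`C_{w≤0} ⊆ C_{w≤0}[1]`, `C_{w≥0}[1] ⊆ C_{w≥0}`, `Hom(C_{w≤0}, C_{w≥0}[1]) = 0`,
and every object admits a weight decomposition. -/
structure WeightStructure where
  LE : Set C
  GE : Set C
  retract_LE : ∀ ⦃X Y : C⦄, IsRetract X Y → Y ∈ LE → X ∈ LE
  retract_GE : ∀ ⦃X Y : C⦄, IsRetract X Y → Y ∈ GE → X ∈ GE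
  shift_LE : ∀ ⦃X : C⦄, X ∈ LE → X⟦(-1 : ℤ)⟧ ∈ LE
  shift_GE : ∀ ⦃X : C⦄, X ∈ GE → X⟦(1 : ℤ)⟧ ∈ GE
  orthogonal : ∀ ⦃X Y : C⦄, X ∈ LE → Y ∈ GE → ∀ f : X ⟶ Y⟦(1 : ℤ)⟧, f = 0
  decomp : ∀ M : C, ∃ (X Y : C) (f : X ⟶ M) (g : M ⟶ Y) (h : Y ⟶ X⟦(1 : ℤ)⟧),
    Triangle.mk f g h ∈ (distTriang C) ∧ X ∈ LE ∧ Y⟦(-1 : ℤ)⟧ ∈ GE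

variable {C}

namespace WeightStructure

variable (w : WeightStructure C)

/-- `C_{w≤i} = C_{w≤0}[i]`. -/
def le (i : ℤ) : Set C := {X : C | X⟦(-i)⟧ ∈ w.LE}

/-- `C_{w≥i} = C_{w≥0}[i]`. -/
def ge (i : ℤ) : Set C := {X : C | X⟦(-i)⟧ ∈ w.GE}

/-- `C_{w=i} = C_{w≤i} ∩ C_{w≥i}`. -/
def eqw (i : ℤ) : Set C := w.le i ∩ w.ge i

/-- `w` is bounded if every object lies in some `C_{w≤i}` and in some `C_{w≥i}`. -/
def IsBounded : Prop := ∀ X : C, (∃ i : ℤ, X ∈ w.le i) ∧ (∃ i : ℤ, X ∈ w.ge i)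

end WeightStructure

/-- The extension-closure of a class `S` of objects: the smallest class containing
the zero objects and `S` and closed under extensions (distinguished triangles). -/
inductive ExtClosure (S : Set C) : C → Prop
  | zero (X : C) : IsZero X → ExtClosure S X
  | of (X : C) : X ∈ S → ExtClosure S X
  | ext {A E B : C} (f : A ⟶ E) (g : E ⟶ B) (h : B ⟶ A⟦(1 : ℤ)⟧) :
      Triangle.mk f g h ∈ (distTriang C) → ExtClosure S A → ExtClosure S B → ExtClosure S E

/-- The smallest full Karoubi-closed (strict) triangulated subcategory containing `S`:
closure under zero objects, shifts, cones and retracts. -/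
inductive TriangClosure (S : Set C) : C → Prop
  | of (X : C) : X ∈ S → TriangClosure S X
  | zero (X : C) : IsZero X → TriangClosure S X
  | shift (X : C) (n : ℤ) : TriangClosure S X → TriangClosure S (X⟦n⟧)
  | ext {X Y Z : C} (f : X ⟶ Y) (g : Y ⟶ Z) (h : Z ⟶ X⟦(1 : ℤ)⟧) :
      Triangle.mk f g h ∈ (distTriang C) → TriangClosure S X → TriangClosure S Y →
      TriangClosure S Z
  | retract (X Y : C) : IsRetract X Y → TriangClosure S Y → TriangClosure S X

/-- A (strict) full triangulated subcategory, given by its class of objects: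
it contains the zero objects and is closed under shifts and under the
two-out-of-three property for distinguished triangles. -/
structure IsTriangulatedSub (P : Set C) : Prop where
  zero : ∀ X : C, IsZero X → X ∈ P
  shift : ∀ X ∈ P, ∀ n : ℤ, X⟦n⟧ ∈ P
  ext₂ : ∀ ⦃X Y Z : C⦄ (f : X ⟶ Y) (g : Y ⟶ Z) (h : Z ⟶ X⟦(1 : ℤ)⟧),
    Triangle.mk f g h ∈ (distTriang C) → X ∈ P → Z ∈ P → Y ∈ P
  ext₃ : ∀ ⦃X Y Z : C⦄ (f : X ⟶ Y) (g : Y ⟶ Z) (h : Z ⟶ X⟦(1 : ℤ)⟧),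
    Triangle.mk f g h ∈ (distTriang C) → X ∈ P → Y ∈ P → Z ∈ P
  ext₁ : ∀ ⦃X Y Z : C⦄ (f : X ⟶ Y) (g : Y ⟶ Z) (h : Z ⟶ X⟦(1 : ℤ)⟧),
    Triangle.mk f g h ∈ (distTriang C) → Y ∈ P → Z ∈ P → X ∈ P

/-- A weight structure on the full (triangulated) subcategory of `C` whose objects
are given by the class `P`; retracts are taken inside `P` and the distinguished
triangles of the subcategory are the distinguished triangles of `C` with vertices
in `P`. -/
structure IsWeightStructureOn (P LEs GEs : Set C) : Prop where
  le_sub : LEs ⊆ P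
  ge_sub : GEs ⊆ P
  retract_le : ∀ ⦃X Y : C⦄, X ∈ P → IsRetract X Y → Y ∈ LEs → X ∈ LEs
  retract_ge : ∀ ⦃X Y : C⦄, X ∈ P → IsRetract X Y → Y ∈ GEs → X ∈ GEs
  shift_le : ∀ ⦃X : C⦄, X ∈ LEs → X⟦(-1 : ℤ)⟧ ∈ LEs
  shift_ge : ∀ ⦃X : C⦄, X ∈ GEs → X⟦(1 : ℤ)⟧ ∈ GEs
  orthogonal : ∀ ⦃X Y : C⦄, X ∈ LEs → Y ∈ GEs → ∀ f : X ⟶ Y⟦(1 : ℤ)⟧, f = 0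
  decomp : ∀ M ∈ P, ∃ (X Y : C) (f : X ⟶ M) (g : M ⟶ Y) (h : Y ⟶ X⟦(1 : ℤ)⟧),
    Triangle.mk f g h ∈ (distTriang C) ∧ X ∈ LEs ∧ Y⟦(-1 : ℤ)⟧ ∈ GEs

/-- The class of morphisms of `C` whose cone lies in `P`; the Verdier quotient
`C/P` is the localization of `C` at this class. -/
def coneIn (P : Set C) : MorphismProperty C := fun X Y f =>
  ∃ (Z : C) (g : Y ⟶ Z) (h : Z ⟶ X⟦(1 : ℤ)⟧),
    Triangle.mk f g h ∈ (distTriang C) ∧ Z ∈ P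

/-- A weight Postnikov tower for `M`: choices of weight truncations `trunc l = w_{≤l}M`
(with cones `conePt l = w_{≥l+1}M`), of the connecting morphisms between them that are
compatible with `𝟙 M`, and of the distinguished triangles
`w_{≤l}M → w_{≤l+1}M → M^{-l-1}[l+1] → (w_{≤l}M)[1]`; the objects `termAt l = M^{-l}`
lie in the heart and are the terms of the associated weight complex `t(M)`, whose
boundary morphisms `bd (l+1) l : M^{-l-1} → M^{-l}` are obtained by composing the
connecting morphisms of two consecutive triangles. -/
structure WeightPostnikovTower (w : WeightStructure C) (M : C) where
  trunc : ℤ → C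
  trunc_mem : ∀ l : ℤ, trunc l ∈ w.le l
  ι : ∀ l : ℤ, trunc l ⟶ M
  conePt : ℤ → C
  cone_mem : ∀ l : ℤ, conePt l ∈ w.ge (l + 1)
  coneπ : ∀ l : ℤ, M ⟶ conePt l
  coneδ : ∀ l : ℤ, conePt l ⟶ (trunc l)⟦(1 : ℤ)⟧
  trunc_dist : ∀ l : ℤ, Triangle.mk (ι l) (coneπ l) (coneδ l) ∈ (distTriang C)
  step : ∀ l : ℤ, trunc l ⟶ trunc (l + 1)
  step_ι : ∀ l : ℤ, step l ≫ ι (l + 1) = ι l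
  termAt : ℤ → C
  term_mem : ∀ l : ℤ, termAt l ∈ w.LE ∧ termAt l ∈ w.GE
  sπ : ∀ l : ℤ, trunc l ⟶ (termAt l)⟦l⟧
  sδ : ∀ l : ℤ, (termAt (l + 1))⟦(l + 1 : ℤ)⟧ ⟶ (trunc l)⟦(1 : ℤ)⟧
  step_dist : ∀ l : ℤ, Triangle.mk (step l) (sπ (l + 1)) (sδ l) ∈ (distTriang C)
  bd : ∀ i j : ℤ, termAt i ⟶ termAt j
  bd_shape : ∀ i j : ℤ, j + 1 ≠ i → bd i j = 0
  bd_eq : ∀ l : ℤ,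
    (shiftFunctor C (l + 1)).map (bd (l + 1) l) ≫
      (shiftFunctorAdd' C l 1 (l + 1) rfl).hom.app (termAt l) =
    sδ l ≫ (shiftFunctor C (1 : ℤ)).map (sπ l)

/-- The differential of the weight complex associated to a weight Postnikov tower,
in "homological" indexing: the `l`-th term `termAt l` is the `(-l)`-th term `M^{-l}`
of the weight complex. -/
def towerD {w : WeightStructure C} {M : C} (T : WeightPostnikovTower w M) :
    ∀ l : ℤ, T.termAt (l + 1) ⟶ T.termAt l :=
  fun l => T.bd (l + 1) l

section Complexes

variable {X Y : ℤ → C}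

/-- A morphism of ("homologically indexed") complexes. -/
def IsChainMapDown (X Y : ℤ → C) (dX : ∀ l : ℤ, X (l + 1) ⟶ X l)
    (dY : ∀ l : ℤ, Y (l + 1) ⟶ Y l) (f : ∀ l : ℤ, X l ⟶ Y l) : Prop :=
  ∀ l : ℤ, f (l + 1) ≫ dY l = dX l ≫ f l

/-- Two families of morphisms of complexes are chain homotopic. -/
def ChainHomotopicDown (X Y : ℤ → C) (dX : ∀ l : ℤ, X (l + 1) ⟶ X l)
    (dY : ∀ l : ℤ, Y (l + 1) ⟶ Y l) (f g : ∀ l : ℤ, X l ⟶ Y l) : Prop :=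
  ∃ s : ∀ l : ℤ, X l ⟶ Y (l + 1),
    ∀ l : ℤ, f (l + 1) - g (l + 1) = s (l + 1) ≫ dY (l + 1) + dX l ≫ s l

/-- Two complexes are homotopy equivalent (i.e., isomorphic in the homotopy category). -/
def HomotopyEquivDown (X Y : ℤ → C) (dX : ∀ l : ℤ, X (l + 1) ⟶ X l)
    (dY : ∀ l : ℤ, Y (l + 1) ⟶ Y l) : Prop :=
  ∃ (f : ∀ l : ℤ, X l ⟶ Y l) (g : ∀ l : ℤ, Y l ⟶ X l),
    IsChainMapDown X Y dX dY f ∧ IsChainMapDown Y X dY dX g ∧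
    ChainHomotopicDown X X dX dX (fun l => f l ≫ g l) (fun l => 𝟙 (X l)) ∧
    ChainHomotopicDown Y Y dY dY (fun l => g l ≫ f l) (fun l => 𝟙 (Y l))

end Complexes

open scoped ZeroObject

section Localization

variable {𝒟 : Type*} [Category 𝒟] {W : MorphismProperty 𝒟}

lemma hasLeftCalculusOfFractions_multiplicativeClosure
    (exists_square : ∀ ⦃A B Y : 𝒟⦄ (s : A ⟶ B) (f : A ⟶ Y), W s →
      ∃ (Y' : 𝒟) (t : Y ⟶ Y') (f' : B ⟶ Y'), W t ∧ f ≫ t = s ≫ f')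
    (exists_coequalizing : ∀ ⦃A B Y : 𝒟⦄ (s : A ⟶ B) (f₁ f₂ : B ⟶ Y), W s → s ≫ f₁ = s ≫ f₂ →
      ∃ (Y' : 𝒟) (t : Y ⟶ Y'), W t ∧ f₁ ≫ t = f₂ ≫ t) :
    W.multiplicativeClosure.HasLeftCalculusOfFractions where
  exists_leftFraction X Y φ := by
    obtain ⟨s, hs, f⟩ := φ
    suffices ∃ (Y' : 𝒟) (t : Y ⟶ Y') (f' : X ⟶ Y'),
        W.multiplicativeClosure t ∧ f ≫ t = s ≫ f' by
      obtain ⟨Y', t, f', ht, h⟩ := this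
      exact ⟨⟨f', t, ht⟩, h⟩
    induction hs with
    | of s hs =>
      obtain ⟨Y', t, f', ht, h⟩ := exists_square s f hs
      exact ⟨Y', t, f', .of t ht, h⟩
    | id _ => exact ⟨Y, 𝟙 Y, f, .id Y, by simp⟩
    | comp_of s₁ s₂ _ hs₂ ih =>
      obtain ⟨Y₁, t₁, f₁, ht₁, h₁⟩ := ih f
      obtain ⟨Y₂, t₂, f₂, ht₂, h₂⟩ := exists_square s₂ f₁ hs₂
      exact ⟨Y₂, t₁ ≫ t₂, f₂, .comp_of t₁ t₂ ht₁ ht₂, by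
        rw [Category.assoc, ← h₂, reassoc_of% h₁]⟩
  ext X' X Y f₁ f₂ s hs hf := by
    induction hs with
    | of s hs =>
      obtain ⟨Y', t, ht, h⟩ := exists_coequalizing s f₁ f₂ hs hf
      exact ⟨Y', t, .of t ht, h⟩
    | id _ => exact ⟨Y, 𝟙 Y, .id Y, by simpa using hf⟩
    | comp_of s₁ s₂ _ hs₂ ih =>
      obtain ⟨Y₁, t₁, ht₁, h₁⟩ := ih (s₂ ≫ f₁) (s₂ ≫ f₂) (by simpa using hf)
      obtain ⟨Y₂, t₂, ht₂, h₂⟩ :=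
        exists_coequalizing s₂ (f₁ ≫ t₁) (f₂ ≫ t₁) hs₂ (by simpa using h₁)
      exact ⟨Y₂, t₁ ≫ t₂, .comp_of t₁ t₂ ht₁ ht₂, by simpa using h₂⟩

lemma isLocalization_multiplicativeClosure {E : Type*} [Category E] (L : 𝒟 ⥤ E)
    (W : MorphismProperty 𝒟) [L.IsLocalization W] : L.IsLocalization W.multiplicativeClosure := by
  have : (𝟭 E).IsLocalization (⊥ : MorphismProperty E) := Functor.IsLocalization.for_id _ bot_le
  have inverts : W.multiplicativeClosure ≤ (MorphismProperty.isomorphisms E).inverseImage L :=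
    (W.multiplicativeClosure_le_iff _).2 (Localization.inverts L W)
  exact Functor.IsLocalization.comp L (𝟭 E) W ⊥ W.multiplicativeClosure
    (fun _ _ f hf => inverts f hf) W.le_multiplicativeClosure bot_le

end Localization

section Triangulated

variable {S Q : ObjectProperty C}

lemma extensionProduct_iff_exists_trW {X : C} :
    S.extensionProduct Q X ↔ ∃ (d : C) (φ : d ⟶ X), S d ∧ Q.trW φ :=
  ⟨fun ⟨d, c, φ, g, h, hT, hd, hc⟩ => ⟨d, φ, hd, c, g, h, hT, hc⟩,
    fun ⟨d, φ, hd, c, g, h, hT, hc⟩ => ⟨d, c, φ, g, h, hT, hd, hc⟩⟩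

lemma extensionProduct_le_shift {S' Q' : ObjectProperty C} (n : ℤ) (hS : S ≤ S'.shift n)
    (hQ : Q ≤ Q'.shift n) : S.extensionProduct Q ≤ (S'.extensionProduct Q').shift n :=
  fun _ ⟨_, _, _, _, _, hT, hd, hc⟩ =>
    ⟨_, _, _, _, _, Triangle.shift_distinguished _ hT n, hS _ hd, hQ _ hc⟩

lemma exists_eq_comp_shift_map_mor₁ {T : Triangle C} (hT : T ∈ distTriang C) {A : C}
    (a : A ⟶ T.obj₂⟦(1 : ℤ)⟧) (ha : a ≫ T.mor₂⟦(1 : ℤ)⟧' = 0) :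
    ∃ b : A ⟶ T.obj₁⟦(1 : ℤ)⟧, a = b ≫ T.mor₁⟦(1 : ℤ)⟧' := by
  obtain ⟨b, hb⟩ : ∃ b : A ⟶ T.obj₁⟦(1 : ℤ)⟧, a = b ≫ (-T.mor₁⟦(1 : ℤ)⟧') :=
    T.rotate.coyoneda_exact₁ (rot_of_distTriang T hT) a ha
  exact ⟨-b, by rw [hb, Preadditive.neg_comp, Preadditive.comp_neg]⟩

lemma hom_obj₃_eq_zero_iff {T : Triangle C} (hT : T ∈ distTriang C) (A : C) :
    (∀ f : A ⟶ T.obj₃, f = 0) ↔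
      (∀ b : A ⟶ T.obj₂, ∃ a : A ⟶ T.obj₁, a ≫ T.mor₁ = b) ∧
        ∀ a : A ⟶ T.obj₁⟦(1 : ℤ)⟧, a ≫ T.mor₁⟦(1 : ℤ)⟧' = 0 → a = 0 := by
  refine ⟨fun h => ⟨fun b => ?_, fun a ha => ?_⟩, fun ⟨surj, inj⟩ f => ?_⟩
  · obtain ⟨a, rfl⟩ := T.coyoneda_exact₂ hT b (h _)
    exact ⟨a, rfl⟩
  · obtain ⟨f, rfl⟩ := T.coyoneda_exact₁ hT a ha
    rw [h f, zero_comp]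
  · have hf : f ≫ T.mor₃ = 0 :=
      inj _ (by rw [Category.assoc, comp_distTriang_mor_zero₃₁ T hT, comp_zero])
    obtain ⟨b, rfl⟩ := T.coyoneda_exact₃ hT f hf
    obtain ⟨a, rfl⟩ := surj b
    rw [Category.assoc, comp_distTriang_mor_zero₁₂ T hT, comp_zero]

lemma trW_rightOrthogonal_iff {X Y : C} (f : X ⟶ Y) :
    Q.rightOrthogonal.trW f ↔ ∀ A, Q A →
      (∀ b : A ⟶ Y, ∃ a : A ⟶ X, a ≫ f = b) ∧
        ∀ a : A ⟶ X⟦(1 : ℤ)⟧, a ≫ f⟦(1 : ℤ)⟧' = 0 → a = 0 := by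
  constructor
  · rintro ⟨Z, g, h, hT, hZ⟩ A hA
    exact (hom_obj₃_eq_zero_iff hT A).1 fun u => hZ u hA
  · intro hf
    obtain ⟨Z, g, h, hT⟩ := distinguished_cocone_triangle f
    exact ⟨Z, g, h, hT, fun A u hA => (hom_obj₃_eq_zero_iff hT A).2 (hf A hA) u⟩

section FiveLemma

variable {T T' : Triangle C} {A : C}

lemma exists_comp_hom₂_eq
    (hT : T ∈ distTriang C) (hT' : T' ∈ distTriang C) (φ : T ⟶ T')
    (surj₁ : ∀ b : A ⟶ T'.obj₁, ∃ a : A ⟶ T.obj₁, a ≫ φ.hom₁ = b)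
    (surj₃ : ∀ b : A ⟶ T'.obj₃, ∃ a : A ⟶ T.obj₃, a ≫ φ.hom₃ = b)
    (inj₁ : ∀ a : A ⟶ T.obj₁⟦(1 : ℤ)⟧, a ≫ φ.hom₁⟦(1 : ℤ)⟧' = 0 → a = 0) (b : A ⟶ T'.obj₂) :
    ∃ a : A ⟶ T.obj₂, a ≫ φ.hom₂ = b := by
  obtain ⟨c, hc⟩ := surj₃ (b ≫ T'.mor₂)
  have hc₀ : c ≫ T.mor₃ = 0 := inj₁ _ (by
    rw [Category.assoc, φ.comm₃, reassoc_of% hc, comp_distTriang_mor_zero₂₃ T' hT', comp_zero])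
  obtain ⟨a, rfl⟩ := T.coyoneda_exact₃ hT c hc₀
  obtain ⟨b₁, hb₁⟩ := T'.coyoneda_exact₂ hT' (b - a ≫ φ.hom₂) (by
    rw [Preadditive.sub_comp, ← hc, Category.assoc, Category.assoc, φ.comm₂, sub_self])
  obtain ⟨a₁, rfl⟩ := surj₁ b₁
  refine ⟨a + a₁ ≫ T.mor₁, ?_⟩
  rw [Preadditive.add_comp, Category.assoc, φ.comm₁, ← Category.assoc, ← hb₁, add_sub_cancel]

lemma eq_zero_of_comp_shift_map_hom₂_eq_zero
    (hT : T ∈ distTriang C) (hT' : T' ∈ distTriang C) (φ : T ⟶ T')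
    (surj₃ : ∀ b : A ⟶ T'.obj₃, ∃ a : A ⟶ T.obj₃, a ≫ φ.hom₃ = b)
    (inj₁ : ∀ a : A ⟶ T.obj₁⟦(1 : ℤ)⟧, a ≫ φ.hom₁⟦(1 : ℤ)⟧' = 0 → a = 0)
    (inj₃ : ∀ a : A ⟶ T.obj₃⟦(1 : ℤ)⟧, a ≫ φ.hom₃⟦(1 : ℤ)⟧' = 0 → a = 0)
    {a : A ⟶ T.obj₂⟦(1 : ℤ)⟧} (ha : a ≫ φ.hom₂⟦(1 : ℤ)⟧' = 0) : a = 0 := by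
  have ha₃ : a ≫ T.mor₂⟦(1 : ℤ)⟧' = 0 := inj₃ _ (by
    rw [Category.assoc, ← Functor.map_comp, φ.comm₂, Functor.map_comp, reassoc_of% ha, zero_comp])
  obtain ⟨a₁, rfl⟩ := exists_eq_comp_shift_map_mor₁ hT a ha₃
  obtain ⟨b₃, hb₃⟩ := T'.coyoneda_exact₁ hT' (a₁ ≫ φ.hom₁⟦(1 : ℤ)⟧') (by
    rw [Category.assoc, ← Functor.map_comp, ← φ.comm₁, Functor.map_comp, ← ha, Category.assoc])
  obtain ⟨a₃, rfl⟩ := surj₃ b₃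
  have ha₁ : a₁ - a₃ ≫ T.mor₃ = 0 := inj₁ _ (by
    rw [Preadditive.sub_comp, hb₃, Category.assoc, Category.assoc, φ.comm₃, sub_self])
  rw [sub_eq_zero.1 ha₁, Category.assoc, comp_distTriang_mor_zero₃₁ T hT, comp_zero]

-- In the absence of the octahedral axiom the three cones need not form a triangle.
lemma trW_rightOrthogonal_hom₂
    (hT : T ∈ distTriang C) (hT' : T' ∈ distTriang C) (φ : T ⟶ T')
    (h₁ : Q.rightOrthogonal.trW φ.hom₁) (h₃ : Q.rightOrthogonal.trW φ.hom₃) :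
    Q.rightOrthogonal.trW φ.hom₂ := by
  rw [trW_rightOrthogonal_iff] at h₁ h₃ ⊢
  intro A hA
  obtain ⟨surj₁, inj₁⟩ := h₁ A hA
  obtain ⟨surj₃, inj₃⟩ := h₃ A hA
  exact ⟨exists_comp_hom₂_eq hT hT' φ surj₁ surj₃ inj₁,
    fun _ => eq_zero_of_comp_shift_map_hom₂_eq_zero hT hT' φ surj₃ inj₁ inj₃⟩

end FiveLemma

end Triangulated

/-- The morphism `a` factors through an object satisfying `P`. -/
def FactorsThrough {𝒟 : Type*} [Category 𝒟] (P : ObjectProperty 𝒟) {A B : 𝒟} (a : A ⟶ B) : Prop :=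
  ∃ (p : 𝒟) (u : A ⟶ p) (v : p ⟶ B), P p ∧ u ≫ v = a

namespace FactorsThrough

variable {P S Q : ObjectProperty C} {A B : C} {a : A ⟶ B}

lemma of_leftOrthogonal (ha : FactorsThrough P a) (hP : P ≤ S.extensionProduct Q)
    (hA : Q.leftOrthogonal A) : FactorsThrough S a := by
  obtain ⟨p, u, v, hp, rfl⟩ := ha
  obtain ⟨d, c, f, g, h, hT, hd, hc⟩ := hP p hp
  obtain ⟨u', rfl⟩ : ∃ u' : A ⟶ d, u = u' ≫ f := Triangle.coyoneda_exact₂ _ hT u (hA _ hc)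
  exact ⟨d, u', f ≫ v, hd, (Category.assoc _ _ _).symm⟩

lemma of_rightOrthogonal (ha : FactorsThrough P a) (hP : P ≤ S.extensionProduct Q)
    (hB : S.rightOrthogonal B) : FactorsThrough Q a := by
  obtain ⟨p, u, v, hp, rfl⟩ := ha
  obtain ⟨d, c, f, g, h, hT, hd, hc⟩ := hP p hp
  obtain ⟨v', rfl⟩ : ∃ v' : c ⟶ B, v = g ≫ v' := Triangle.yoneda_exact₂ _ hT v (hB _ hd)
  exact ⟨c, u ≫ g, v', hc, Category.assoc _ _ _⟩

lemma of_comp_trW [P.IsTriangulated] [P.IsClosedUnderIsomorphisms] {B' : C} {s : B ⟶ B'}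
    (hs : P.trW s) (has : FactorsThrough P (a ≫ s)) : FactorsThrough P a := by
  obtain ⟨p₀, z, y, hT, hp₀⟩ := (P.trW_iff' s).1 hs
  obtain ⟨p, u, v, hp, huv⟩ := has
  obtain ⟨q, hq, k, m, hT'⟩ := P.distinguished_cocone_triangle₂ (v ≫ y) hp₀ hp
  have hvy : (v ≫ y) ≫ (𝟙 p₀)⟦(1 : ℤ)⟧' = v ≫ y := by simp
  obtain ⟨b, -, hb⟩ : ∃ b : q ⟶ B, k ≫ b = 𝟙 p₀ ≫ z ∧ m ≫ v = b ≫ s :=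
    complete_distinguished_triangle_morphism₂ _ _ hT' hT (𝟙 p₀) v hvy
  have huvy : u ≫ v ≫ y = 0 := by
    have hsy : s ≫ y = 0 := comp_distTriang_mor_zero₂₃ _ hT
    rw [reassoc_of% huv, hsy, comp_zero]
  obtain ⟨u', rfl⟩ : ∃ u' : A ⟶ q, u = u' ≫ m := Triangle.coyoneda_exact₃ _ hT' u huvy
  obtain ⟨x, hx⟩ : ∃ x : A ⟶ p₀, a - u' ≫ b = x ≫ z :=
    Triangle.coyoneda_exact₂ _ hT (a - u' ≫ b) (by
      change (a - u' ≫ b) ≫ s = 0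
      rw [Preadditive.sub_comp, Category.assoc, ← hb, ← Category.assoc, huv, sub_self])
  refine ⟨p₀ ⊞ q, biprod.lift x u', biprod.desc z b, ?_, ?_⟩
  · exact P.ext_of_isTriangulatedClosed₂ _ (binaryBiproductTriangle_distinguished p₀ q) hp₀ hq
  · rw [biprod.lift_desc, ← hx, sub_add_cancel]

lemma of_comp_multiplicativeClosure_trW [P.IsTriangulated] [P.IsClosedUnderIsomorphisms] {B' : C}
    {s : B ⟶ B'} (hs : P.trW.multiplicativeClosure s) (has : FactorsThrough P (a ≫ s)) :
    FactorsThrough P a := by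
  induction hs with
  | of s hs => exact has.of_comp_trW hs
  | id _ => rwa [Category.comp_id] at has
  | comp_of _ t _ ht ih => exact ih (of_comp_trW ht (by rwa [Category.assoc]))

end FactorsThrough

section VerdierQuotient

variable {P : ObjectProperty C}

-- Without the octahedral axiom `P.trW` need not be closed under composition.
lemma hasLeftCalculusOfFractions_multiplicativeClosure_trW [P.IsStableUnderShift ℤ] :
    P.trW.multiplicativeClosure.HasLeftCalculusOfFractions := by
  refine hasLeftCalculusOfFractions_multiplicativeClosure ?_ ?_
  · rintro A B Y s f ⟨Z, g, h, hT, hZ⟩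
    obtain ⟨Y', t, u, hT'⟩ := distinguished_cocone_triangle₂ (h ≫ f⟦(1 : ℤ)⟧')
    obtain ⟨f', hf', -⟩ := complete_distinguished_triangle_morphism₂ _ _ hT hT' f (𝟙 Z)
      (Category.id_comp _).symm
    exact ⟨Y', t, f', ⟨Z, u, _, hT', hZ⟩, hf'.symm⟩
  · rintro A B Y s f₁ f₂ ⟨Z, g, h, hT, hZ⟩ hf
    obtain ⟨u, hu⟩ : ∃ u : Z ⟶ Y, f₁ - f₂ = g ≫ u :=
      Triangle.yoneda_exact₂ _ hT _ ((Preadditive.comp_sub _ _ _).trans (sub_eq_zero.2 hf))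
    obtain ⟨Y', t, v, hT'⟩ := distinguished_cocone_triangle u
    have hut : u ≫ t = 0 := comp_distTriang_mor_zero₁₂ _ hT'
    refine ⟨Y', t, ObjectProperty.trW.mk' P hT' hZ, sub_eq_zero.1 ?_⟩
    rw [← Preadditive.sub_comp, hu, Category.assoc, hut, comp_zero]

variable {E : Type*} [Category E] (L : C ⥤ E) [L.IsLocalization P.trW]

-- `L.map 0` stands in for the zero morphism, as `E` is a bare category.
lemma map_eq_map_zero_iff [P.IsTriangulated] [P.IsClosedUnderIsomorphisms] {A B : C} (a : A ⟶ B) :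
    L.map a = L.map 0 ↔ FactorsThrough P a := by
  constructor
  · intro ha
    have := hasLeftCalculusOfFractions_multiplicativeClosure_trW (P := P)
    have := isLocalization_multiplicativeClosure L P.trW
    obtain ⟨B', s, hs, has⟩ :=
      (MorphismProperty.map_eq_iff_postcomp L P.trW.multiplicativeClosure a 0).1 ha
    obtain ⟨o, -, ho⟩ := P.exists_prop_of_containsZero
    exact .of_comp_multiplicativeClosure_trW hs ⟨o, 0, 0, ho, by simp [has]⟩
  · rintro ⟨p, u, v, hp, rfl⟩
    have hz : P.trW (0 : (0 : C) ⟶ p) := .mk P (contractible_distinguished₁ p) hp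
    have := Localization.inverts L P.trW _ hz
    have hv : L.map v = L.map 0 := by
      rw [← cancel_epi (L.map (0 : (0 : C) ⟶ p)), ← L.map_comp, ← L.map_comp, zero_comp, zero_comp]
    rw [L.map_comp, hv, ← L.map_comp, comp_zero]

end VerdierQuotient

namespace WeightStructure

variable (w : WeightStructure C)

/-- The class `C_{w≤i}` as a property of objects. -/
def isLE (i : ℤ) : ObjectProperty C := fun X => X ∈ w.le i

/-- The class `C_{w≥i}` as a property of objects. -/
def isGE (i : ℤ) : ObjectProperty C := fun X => X ∈ w.ge i

lemma LE_of_iso {X Y : C} (e : X ≅ Y) (hX : X ∈ w.LE) : Y ∈ w.LE :=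
  w.retract_LE ⟨e.inv, e.hom, e.inv_hom_id⟩ hX

lemma GE_of_iso {X Y : C} (e : X ≅ Y) (hX : X ∈ w.GE) : Y ∈ w.GE :=
  w.retract_GE ⟨e.inv, e.hom, e.inv_hom_id⟩ hX

lemma mem_le_zero_iff {X : C} : X ∈ w.le 0 ↔ X ∈ w.LE :=
  ⟨w.LE_of_iso ((shiftFunctorZero' C (-0 : ℤ) neg_zero).app X),
    w.LE_of_iso ((shiftFunctorZero' C (-0 : ℤ) neg_zero).app X).symm⟩

lemma mem_ge_zero_iff {X : C} : X ∈ w.ge 0 ↔ X ∈ w.GE :=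
  ⟨w.GE_of_iso ((shiftFunctorZero' C (-0 : ℤ) neg_zero).app X),
    w.GE_of_iso ((shiftFunctorZero' C (-0 : ℤ) neg_zero).app X).symm⟩

instance (i : ℤ) : (w.isLE i).IsStableUnderRetracts where
  of_retract r hY := w.retract_LE ⟨r.i⟦-i⟧', r.r⟦-i⟧', by
    rw [← Functor.map_comp, r.retract, CategoryTheory.Functor.map_id]⟩ hY

instance (i : ℤ) : (w.isGE i).IsStableUnderRetracts where
  of_retract r hY := w.retract_GE ⟨r.i⟦-i⟧', r.r⟦-i⟧', by
    rw [← Functor.map_comp, r.retract, CategoryTheory.Functor.map_id]⟩ hY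

lemma isLE_le_shift {i j n : ℤ} (hn : i + n = j) : w.isLE i ≤ (w.isLE j).shift n := fun X hX =>
  w.LE_of_iso ((shiftFunctorAdd' C n (-j) (-i) (by omega)).app X) hX

lemma isGE_le_shift {i j n : ℤ} (hn : i + n = j) : w.isGE i ≤ (w.isGE j).shift n := fun X hX =>
  w.GE_of_iso ((shiftFunctorAdd' C n (-j) (-i) (by omega)).app X) hX

lemma monotone_isLE : Monotone w.isLE :=
  monotone_int_of_le_succ fun i X hX =>
    w.LE_of_iso ((shiftFunctorAdd' C (-i) (-1) (-(i + 1)) (by omega)).app X).symm (w.shift_LE hX)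

lemma antitone_isGE : Antitone w.isGE :=
  antitone_int_of_succ_le fun i X hX =>
    w.GE_of_iso ((shiftFunctorAdd' C (-(i + 1)) 1 (-i) (by omega)).app X).symm (w.shift_GE hX)

lemma hom_eq_zero {i j : ℤ} (hij : i < j) {X Y : C} (hX : w.isLE i X) (hY : w.isGE j Y)
    (f : X ⟶ Y) : f = 0 := by
  have hY' : w.isGE (i + 1) Y := w.antitone_isGE hij Y hY
  let e := (shiftFunctorAdd' C (-(i + 1)) 1 (-i) (by omega)).app Y
  refine (shiftFunctor C (-i)).map_injective ?_
  rw [Functor.map_zero, ← cancel_mono e.hom, w.orthogonal hX hY' (f⟦-i⟧' ≫ e.hom), zero_comp]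

/-- The weight structure `w` restricts to the full subcategory of objects satisfying `P`: these
objects have weight decompositions, in each weight, whose terms satisfy `P` as well. The remaining
axioms of a weight structure on the subcategory are inherited from `C`. -/
def RestrictsTo (P : ObjectProperty C) : Prop :=
  ∀ i, P ≤ (P ⊓ w.isLE i).extensionProduct (P ⊓ w.isGE (i + 1))

lemma restrictsTo_of_le_extensionProduct_zero {P : ObjectProperty C} [P.IsStableUnderShift ℤ]
    (hP : P ≤ (P ⊓ w.isLE 0).extensionProduct (P ⊓ w.isGE 1)) : w.RestrictsTo P := by
  intro i M hM
  have hd : P ⊓ w.isLE 0 ≤ (P ⊓ w.isLE i).shift i := fun X hX =>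
    ⟨P.le_shift i X hX.1, w.isLE_le_shift (zero_add i) X hX.2⟩
  have hc : P ⊓ w.isGE 1 ≤ (P ⊓ w.isGE (i + 1)).shift i := fun X hX =>
    ⟨P.le_shift i X hX.1, w.isGE_le_shift (add_comm 1 i) X hX.2⟩
  have hM' := extensionProduct_le_shift i hd hc _ (hP _ (P.le_shift (-i) M hM))
  exact ObjectProperty.prop_of_iso _ ((shiftFunctorCompIsoId C (-i) i (by omega)).app M) hM'

lemma restrictsTo_top : w.RestrictsTo ⊤ := by
  refine w.restrictsTo_of_le_extensionProduct_zero fun M _ => ?_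
  obtain ⟨X, Y, f, g, h, hT, hX, hY⟩ := w.decomp M
  exact ⟨X, Y, f, g, h, hT, ⟨trivial, w.mem_le_zero_iff.2 hX⟩, trivial, hY⟩

lemma extensionProduct_isLE_isGE (i : ℤ) (M : C) :
    (w.isLE i).extensionProduct (w.isGE (i + 1)) M := by
  simpa only [top_inf_eq] using w.restrictsTo_top i M trivial

lemma isGE_succ_eq_rightOrthogonal (i : ℤ) : w.isGE (i + 1) = (w.isLE i).rightOrthogonal := by
  refine le_antisymm (fun Y hY X f hX => w.hom_eq_zero (by omega) hX hY f) fun Y hY => ?_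
  obtain ⟨A, B, f, g, h, hT, hA, hB⟩ := w.extensionProduct_isLE_isGE i Y
  obtain ⟨r, hr⟩ := Triangle.yoneda_exact₂ _ hT (𝟙 Y) ((Category.comp_id _).trans (hY f hA))
  exact (w.isGE (i + 1)).prop_of_retract ⟨g, r, hr.symm⟩ hB

lemma isLE_eq_leftOrthogonal (i : ℤ) : w.isLE i = (w.isGE (i + 1)).leftOrthogonal := by
  refine le_antisymm (fun X hX Y f hY => w.hom_eq_zero (by omega) hX hY f) fun X hX => ?_
  obtain ⟨A, B, f, g, h, hT, hA, hB⟩ := w.extensionProduct_isLE_isGE i X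
  obtain ⟨s, hs⟩ := Triangle.coyoneda_exact₂ _ hT (𝟙 X) ((Category.id_comp _).trans (hX g hB))
  exact (w.isLE i).prop_of_retract ⟨s, f, hs.symm⟩ hA

instance (i : ℤ) : (w.isLE i).ContainsZero := by
  rw [isLE_eq_leftOrthogonal]
  infer_instance

instance (i : ℤ) : (w.isLE i).IsTriangulatedClosed₂ := by
  rw [isLE_eq_leftOrthogonal]
  infer_instance

instance (i : ℤ) : (w.isGE i).ContainsZero := by
  rw [← sub_add_cancel i 1, isGE_succ_eq_rightOrthogonal]
  infer_instance

lemma trW_isGE_hom₂ {T T' : Triangle C} (hT : T ∈ distTriang C) (hT' : T' ∈ distTriang C)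
    (φ : T ⟶ T') {i : ℤ} (h₁ : (w.isGE i).trW φ.hom₁) (h₃ : (w.isGE i).trW φ.hom₃) :
    (w.isGE i).trW φ.hom₂ := by
  rw [← sub_add_cancel i 1, isGE_succ_eq_rightOrthogonal] at h₁ h₃ ⊢
  exact trW_rightOrthogonal_hom₂ hT hT' φ h₁ h₃

lemma extensionProduct_isGE_obj₂ {S : ObjectProperty C} [S.IsTriangulatedClosed₂] {i : ℤ}
    {T : Triangle C} (hT : T ∈ distTriang C) (h₁ : S.extensionProduct (w.isGE i) T.obj₁)
    (h₃ : (S ⊓ w.isLE i).extensionProduct (w.isGE i) T.obj₃) :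
    S.extensionProduct (w.isGE i) T.obj₂ := by
  rw [extensionProduct_iff_exists_trW] at h₃ ⊢
  obtain ⟨d₁, c₁, φ₁, g, h, hT₁, hd₁, hc₁⟩ := h₁
  obtain ⟨d₃, φ₃, hd₃, hφ₃⟩ := h₃
  have hc₁' : w.isGE (i + 1) (c₁⟦(1 : ℤ)⟧) := w.isGE_le_shift rfl _ hc₁
  obtain ⟨k, hk⟩ : ∃ k : d₃ ⟶ d₁⟦(1 : ℤ)⟧, φ₃ ≫ T.mor₃ = k ≫ φ₁⟦(1 : ℤ)⟧' :=
    exists_eq_comp_shift_map_mor₁ hT₁ _ (w.hom_eq_zero (lt_add_one i) hd₃.2 hc₁' _)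
  obtain ⟨d₂, hd₂, a, b, hT₂⟩ := S.distinguished_cocone_triangle₂ k hd₁ hd₃.1
  obtain ⟨φ₂, h₁₂, h₂₃⟩ := complete_distinguished_triangle_morphism₂ _ _ hT₂ hT φ₁ φ₃ hk.symm
  exact ⟨d₂, φ₂, hd₂,
    w.trW_isGE_hom₂ hT₂ hT ⟨φ₁, φ₂, φ₃, h₁₂, h₂₃, hk.symm⟩ ⟨c₁, g, h, hT₁, hc₁⟩ hφ₃⟩

section Restriction

variable {w} {P : ObjectProperty C}

lemma RestrictsTo.inf_isLE_le_extensionProduct (hw : w.RestrictsTo P) (i : ℤ) :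
    P ⊓ w.isLE i ≤ (P ⊓ w.isLE (i - 1)).extensionProduct (P ⊓ w.isLE i ⊓ w.isGE i) := by
  intro p hp
  obtain ⟨m, e, f, g, h, hT, hm, he⟩ := hw (i - 1) p hp.1
  have he_le : w.isLE i e := (w.isLE i).ext_of_isTriangulatedClosed₂ _ (rot_of_distTriang _ hT)
    hp.2 (w.isLE_le_shift (by omega) _ hm.2)
  exact ⟨m, e, f, g, h, hT, hm, ⟨he.1, he_le⟩, by simpa using he.2⟩

lemma RestrictsTo.factorsThrough_inf (hw : w.RestrictsTo P) {i : ℤ} {A B : C} {a : A ⟶ B}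
    (ha : FactorsThrough P a) (hA : w.isLE i A) (hB : w.isGE i B) :
    FactorsThrough (P ⊓ w.isLE i ⊓ w.isGE i) a :=
  (ha.of_leftOrthogonal (hw i) fun _ f hc => w.hom_eq_zero (by omega) hA hc.2 f).of_rightOrthogonal
    (hw.inf_isLE_le_extensionProduct i) fun _ f hm => w.hom_eq_zero (by omega) hm.2 hB f

lemma RestrictsTo.extensionProduct_isGE_of_trW [P.IsTriangulatedClosed₂] (hw : w.RestrictsTo P)
    {i : ℤ} {Y Y' : C} {s : Y ⟶ Y'} (hs : P.trW s) (hY : P.extensionProduct (w.isGE i) Y) :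
    P.extensionProduct (w.isGE i) Y' := by
  obtain ⟨p, g, h, hT, hp⟩ := hs
  have hp' : (P ⊓ w.isLE i).extensionProduct (w.isGE i) p :=
    ObjectProperty.monotone_extensionProduct_right _
      (inf_le_right.trans (w.antitone_isGE (by omega))) p (hw i p hp)
  exact w.extensionProduct_isGE_obj₂ hT hY hp'

lemma RestrictsTo.extensionProduct_isGE_of_multiplicativeClosure_trW [P.IsTriangulatedClosed₂]
    (hw : w.RestrictsTo P) {i : ℤ} {Y Y' : C} {s : Y ⟶ Y'} (hs : P.trW.multiplicativeClosure s)
    (hY : P.extensionProduct (w.isGE i) Y) : P.extensionProduct (w.isGE i) Y' := by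
  induction hs with
  | of s hs => exact hw.extensionProduct_isGE_of_trW hs hY
  | id _ => exact hY
  | comp_of _ t _ ht ih => exact hw.extensionProduct_isGE_of_trW ht (ih hY)

variable [P.IsTriangulated] [P.IsClosedUnderIsomorphisms]
  {E : Type*} [Category E] (L : C ⥤ E) [L.IsLocalization P.trW]

lemma RestrictsTo.hom_map_eq_map_zero (hw : w.RestrictsTo P) {i j : ℤ} (hij : i < j) {X Y : C}
    (hX : w.isLE i X) (hY : w.isGE j Y) (φ : L.obj X ⟶ L.obj Y) : φ = L.map 0 := by
  have := hasLeftCalculusOfFractions_multiplicativeClosure_trW (P := P)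
  have := isLocalization_multiplicativeClosure L P.trW
  obtain ⟨ψ, rfl⟩ := Localization.exists_leftFraction L P.trW.multiplicativeClosure φ
  have := Localization.inverts L _ _ ψ.hs
  obtain ⟨p, c, f, g, h, hT, hp, hc⟩ :=
    hw.extensionProduct_isGE_of_multiplicativeClosure_trW ψ.hs
      (ObjectProperty.le_extensionProduct_right _ Y hY)
  obtain ⟨u, hu⟩ := Triangle.coyoneda_exact₂ _ hT ψ.f (w.hom_eq_zero hij hX hc _)
  have hψ : L.map ψ.f = L.map 0 := (map_eq_map_zero_iff L ψ.f).2 ⟨p, u, f, hp, hu.symm⟩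
  rw [← cancel_mono (L.map ψ.s), ψ.map_comp_map_s, hψ, ← L.map_comp, zero_comp]

lemma RestrictsTo.extensionProduct_succ_of_map_mem_retractClosure (hw : w.RestrictsTo P) {i : ℤ}
    {X : C} (hX : w.isGE i X) (hLX : L.obj X ∈ retractClosure (L.obj '' w.ge (i + 1))) :
    (P ⊓ w.isLE i).extensionProduct (w.isGE (i + 1)) X := by
  obtain ⟨_, ⟨Y, hY, rfl⟩, ι, r, hιr⟩ := hLX
  obtain ⟨t, c, a, g, h, hT, ht, hc⟩ := w.extensionProduct_isLE_isGE i X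
  have ha : L.map a = L.map 0 := by
    have : IsSplitMono ι := ⟨⟨r, hιr⟩⟩
    rw [← cancel_mono ι, hw.hom_map_eq_map_zero L (lt_add_one i) ht hY (L.map a ≫ ι),
      hw.hom_map_eq_map_zero L (lt_add_one i) ht hY (L.map 0 ≫ ι)]
  obtain ⟨e, u, φ, he, rfl⟩ :=
    hw.factorsThrough_inf ((map_eq_map_zero_iff L a).1 ha) ht hX
  refine extensionProduct_iff_exists_trW.2 ⟨e, φ, he.1, ?_⟩
  rw [isGE_succ_eq_rightOrthogonal, trW_rightOrthogonal_iff]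
  refine fun A hA => ⟨fun b => ?_, fun b _ => ?_⟩
  · obtain ⟨b', rfl⟩ : ∃ b' : A ⟶ t, b = b' ≫ u ≫ φ :=
      Triangle.coyoneda_exact₂ _ hT b (w.hom_eq_zero (lt_add_one i) hA hc _)
    exact ⟨b' ≫ u, Category.assoc _ _ _⟩
  · exact w.hom_eq_zero (lt_add_one i) hA (w.isGE_le_shift rfl _ he.2) b

lemma RestrictsTo.extensionProduct_succ (hw : w.RestrictsTo P) {i n : ℤ} (hin : i ≤ n) {X : C}
    (hLX : L.obj X ∈ retractClosure (L.obj '' w.ge (n + 1)))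
    (hX : (P ⊓ w.isLE n).extensionProduct (w.isGE i) X) :
    (P ⊓ w.isLE n).extensionProduct (w.isGE (i + 1)) X := by
  obtain ⟨d, c, f, g, h, hT, hd, hc⟩ := hX
  have hLc : L.obj c ∈ retractClosure (L.obj '' w.ge (i + 1)) := by
    have : IsIso (L.map g) := Localization.inverts L P.trW g (ObjectProperty.trW.mk' P hT hd.1)
    obtain ⟨_, ⟨Y, hY, rfl⟩, ι, r, hιr⟩ := hLX
    exact ⟨_, ⟨Y, w.antitone_isGE (by omega) Y hY, rfl⟩, inv (L.map g) ≫ ι, r ≫ L.map g, by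
      simp [reassoc_of% hιr]⟩
  have hd' : (P ⊓ w.isLE n).extensionProduct (w.isGE (i + 1)) d :=
    ObjectProperty.le_extensionProduct_left _ d hd
  have hc' : (P ⊓ w.isLE n ⊓ w.isLE (i + 1)).extensionProduct (w.isGE (i + 1)) c :=
    ObjectProperty.monotone_extensionProduct_left _
      (le_inf (inf_le_inf_left P (w.monotone_isLE hin))
        (inf_le_right.trans (w.monotone_isLE (by omega)))) c
      (hw.extensionProduct_succ_of_map_mem_retractClosure L hc hLc)
  exact w.extensionProduct_isGE_obj₂ hT hd' hc'

theorem RestrictsTo.extensionProduct_of_map_mem_retractClosure (hw : w.RestrictsTo P) {i n : ℤ}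
    {X : C} (hX : w.isGE i X) (hLX : L.obj X ∈ retractClosure (L.obj '' w.ge (n + 1))) :
    (P ⊓ w.isLE n).extensionProduct (w.isGE (n + 1)) X := by
  have raise : ∀ k, min i (n + 1) ≤ k → k ≤ n + 1 →
      (P ⊓ w.isLE n).extensionProduct (w.isGE k) X := by
    intro k hk
    induction k, hk using Int.leInduction with
    | base =>
      exact fun _ => ObjectProperty.le_extensionProduct_right _ X
        (w.antitone_isGE (min_le_left _ _) X hX)
    | succ k _ ih => exact fun hk => hw.extensionProduct_succ L (by omega) hLX (ih (by omega))
  exact raise (n + 1) (min_le_right _ _) le_rfl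

end Restriction

end WeightStructure

section SetsOfObjects

variable {P : Set C}

lemma IsTriangulatedSub.mem_of_iso (hP : IsTriangulatedSub P) {X Y : C} (e : X ≅ Y) (hX : X ∈ P) :
    Y ∈ P := by
  obtain ⟨Z, g, h, hT⟩ := distinguished_cocone_triangle e.hom
  have hZ : IsZero Z := (Triangle.isZero₃_iff_isIso₁ _ hT).2 e.isIso_hom
  exact hP.ext₂ e.hom g h hT hX (hP.zero Z hZ)

lemma IsTriangulatedSub.isClosedUnderIsomorphisms (hP : IsTriangulatedSub P) :
    ObjectProperty.IsClosedUnderIsomorphisms (fun X => X ∈ P) where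
  of_iso := hP.mem_of_iso

lemma IsTriangulatedSub.isTriangulated (hP : IsTriangulatedSub P) :
    ObjectProperty.IsTriangulated (fun X => X ∈ P) where
  exists_zero := ⟨0, isZero_zero C, hP.zero _ (isZero_zero C)⟩
  isStableUnderShiftBy n := ⟨fun X hX => hP.shift X hX n⟩
  ext₂' T hT h₁ h₃ := ObjectProperty.le_isoClosure _ _ (hP.ext₂ T.mor₁ T.mor₂ T.mor₃ hT h₁ h₃)

lemma coneIn_eq_trW (P : Set C) : coneIn P = ObjectProperty.trW (fun X => X ∈ P) := by
  ext X Y f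
  exact ⟨fun ⟨Z, g, h, hT, hZ⟩ => ⟨Z, g, h, hT, hZ⟩, fun ⟨Z, g, h, hT, hZ⟩ => ⟨Z, g, h, hT, hZ⟩⟩

lemma IsWeightStructureOn.restrictsTo {w : WeightStructure C} (hP : IsTriangulatedSub P)
    (hres : IsWeightStructureOn P (P ∩ w.LE) (P ∩ w.GE)) : w.RestrictsTo (fun X => X ∈ P) := by
  have := hP.isTriangulated
  refine w.restrictsTo_of_le_extensionProduct_zero fun M hM => ?_
  obtain ⟨X, Y, f, g, h, hT, hX, hY⟩ := hres.decomp M hM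
  exact ⟨X, Y, f, g, h, hT, ⟨hX.1, w.mem_le_zero_iff.2 hX.2⟩, hP.ext₃ f g h hT hX.1 hM, hY.2⟩

end SetsOfObjects

theorem statement10_general {E : Type*} [Category E] (w : WeightStructure C)
    (P : Set C) (hP : IsTriangulatedSub P)
    (hres : IsWeightStructureOn P (P ∩ w.LE) (P ∩ w.GE))
    (L : C ⥤ E) [L.IsLocalization (coneIn P)]
    {i : ℤ} {X : C} (hXi : X ∈ w.ge i) (hX : L.obj X ∈ retractClosure (L.obj '' w.GE)) :
    ∃ (d c : C) (f : d ⟶ X) (g : X ⟶ c) (h : c ⟶ d⟦(1 : ℤ)⟧),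
      Triangle.mk f g h ∈ (distTriang C) ∧ c ∈ w.GE ∧ d ∈ P ∧ d ∈ w.le (-1) := by
  have := hP.isTriangulated
  have := hP.isClosedUnderIsomorphisms
  have : L.IsLocalization (ObjectProperty.trW (fun X => X ∈ P)) := by
    rwa [← coneIn_eq_trW]
  have hGE : w.GE = w.ge (-1 + 1) := Set.ext fun _ => w.mem_ge_zero_iff.symm
  rw [hGE] at hX ⊢
  obtain ⟨d, c, f, g, h, hT, hd, hc⟩ :=
    (hres.restrictsTo hP).extensionProduct_of_map_mem_retractClosure L hXi hX
  exact ⟨d, c, f, g, h, hT, hc, hd.1, hd.2⟩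

/-- let `w` be bounded and restrict to the full triangulated subcategory
`D` (with class of objects `P`); let `L : C ⥤ E` realize the Verdier quotient `C/D`.
If `L(X)` lies in `(C/D)_{w≥0}` (the Karoubi-closure of `L(C_{w≥0})`), then there is a
distinguished triangle `d → X → c → d[1]` in `C` with `c ∈ C_{w≥0}` and `d` an object
of `D` lying in `C_{w≤-1}`. -/
theorem statement10 {E : Type*} [Category E] [HasZeroObject E] [HasShift E ℤ]
    [Preadditive E] [∀ n : ℤ, (shiftFunctor E n).Additive] [Pretriangulated E]
    (w : WeightStructure C) (hw : w.IsBounded)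
    (P : Set C) (hP : IsTriangulatedSub P)
    (hres : IsWeightStructureOn P (P ∩ w.LE) (P ∩ w.GE))
    (L : C ⥤ E) [L.CommShift ℤ] [L.IsTriangulated] [L.IsLocalization (coneIn P)]
    (X : C) (hX : L.obj X ∈ retractClosure (L.obj '' w.GE)) :
    ∃ (d c : C) (f : d ⟶ X) (g : X ⟶ c) (h : c ⟶ d⟦(1 : ℤ)⟧),
      Triangle.mk f g h ∈ (distTriang C) ∧ c ∈ w.GE ∧ d ∈ P ∧ d ∈ w.le (-1) := by
  obtain ⟨-, i, hi⟩ := hw X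
  exact statement10_general w P hP hres L hi hX

end CWH
end

section
/- Let w be a bounded weight structure on a triangulated category C, let D be a full triangulated subcategory of C such that w restricts to D, let l : C → C/D be the Verdier quotient functor, let w_{C/D} be the induced weight structure on C/D, and let n ∈ ℤ and M ∈ Obj C. (1) If l(M) ∈ (C/D)_{w_{C/D}≥−n}, then for any distinguished triangle w_{≤−n−1}M →g M →h w_{≥−n}M → (w_{≤−n−1}M)[1] with w_{≤−n−1}M ∈ C_{w≤−n−1} and w_{≥−n}M ∈ C_{w≥−n}, one has l(g) = 0 and l(h) is a split monomorphism in C/D (it admits a retraction). (2) Conversely, if there exist N ∈ C_{w≥−n} and a morphism h : M → N in C such that l(h) is a split monomorphism in C/D, then l(M) ∈ (C/D)_{w_{C/D}≥−n}. -/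
/-!
The heart of the matter is that orthogonality survives in the quotient: if `A ∈ C_{w≤0}` and
`N ∈ C_{w≥0}`, then every `φ : L(A) ⟶ L(N)[1]` vanishes. One writes `φ` as a fraction
`L(s)⁻¹ ≫ L(f)` with `s : A' ⟶ A` inverted by `L` and `A'` still left orthogonal to `C_{w≥1}`;
then `f = 0`.

The fraction is built step by step along a zigzag representing `φ`. The only nontrivial step is to
complete `f : A ⟶ X` and `t : Y ⟶ X`, where `t` has a cone `Z ∈ D`, to a commutative square. Take a
weight decomposition `Z₀ ⟶ Z ⟶ Z₁` inside `D`. As `A` is orthogonal to `Z₁`, the composite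
`A ⟶ X ⟶ Z` factors through `Z₀`, and the fibre `A'` of `A ⟶ Z₀` maps compatibly to `Y`. It remains
left orthogonal to `C_{w≥1}`, being an extension of `A` by `Z₀[-1]`.

For part (1), orthogonality gives `L(g) = 0`, so `L(h)` is a monomorphism, and monomorphisms split
in a triangulated category. Part (2) is immediate, as `L` commutes with shifts.
-/

open CategoryTheory CategoryTheory.Limits CategoryTheory.Pretriangulated

namespace CWH

variable (C : Type*) [Category C] [HasZeroObject C] [HasShift C ℤ]
  [Preadditive C] [∀ n : ℤ, (shiftFunctor C n).Additive] [Pretriangulated C]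

variable {C}

section RelativeOre

variable {A B : Type*} [Category A] [Category B]

/-- The right Ore condition for `W`, restricted to the morphisms `f : X ⟶ Z` whose source satisfies
`Q`; the new source is required to satisfy `Q` again, so that the condition can be iterated. -/
def RightOreOn (W : MorphismProperty A) (Q : ObjectProperty A) : Prop :=
  ∀ ⦃X Y Z : A⦄ (f : X ⟶ Z) (t : Y ⟶ Z), Q X → W t →
    ∃ (X' : A) (s : X' ⟶ X) (f' : X' ⟶ Y), Q X' ∧ W s ∧ s ≫ f = f' ≫ t

namespace RightOreOn

variable {W : MorphismProperty A}

-- `s` itself need not be in `W`, which is not assumed to be stable under composition: `coneIn P` is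
-- in general not, in the absence of the octahedral axiom.
lemma exists_map_comp_eq_map {Q : ObjectProperty A} (hW : RightOreOn W Q) (L : A ⥤ B)
    [L.IsLocalization W] {X Y : A} (hX : Q X) (φ : L.obj X ⟶ L.obj Y) :
    ∃ (X' : A) (s : X' ⟶ X) (f : X' ⟶ Y), Q X' ∧ IsIso (L.map s) ∧ L.map s ≫ φ = L.map f := by
  let IsFraction (ψ : StructuredArrow (L.obj X) L) : Prop :=
    ∃ (X' : A) (s : X' ⟶ X) (f : X' ⟶ ψ.right),
      Q X' ∧ IsIso (L.map s) ∧ L.map s ≫ ψ.hom = L.map f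
  refine Localization.induction_structuredArrow L W IsFraction ?_ ?_ ?_ (StructuredArrow.mk φ)
  · exact ⟨X, 𝟙 X, 𝟙 X, hX, inferInstance, Category.comp_id _⟩
  · rintro Y Z g ψ ⟨X', s, f, hX', hs, hf : L.map s ≫ ψ = L.map f⟩
    refine ⟨X', s, f ≫ g, hX', hs, ?_⟩
    change L.map s ≫ ψ ≫ L.map g = L.map (f ≫ g)
    rw [reassoc_of% hf, L.map_comp]
  · rintro Y Z t ht ψ ⟨X', s, f, hX', hs, hf : L.map s ≫ ψ = L.map f⟩
    obtain ⟨X'', s', f', hX'', hs', hsq⟩ := hW f t hX' ht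
    have : IsIso (L.map s') := Localization.inverts L W s' hs'
    refine ⟨X'', s' ≫ s, f', hX'', L.map_comp s' s ▸ inferInstance, ?_⟩
    change L.map (s' ≫ s) ≫ ψ ≫ (Localization.isoOfHom L W t ht).inv = L.map f'
    rw [← Category.assoc, Iso.comp_inv_eq, Localization.isoOfHom_hom, ← L.map_comp, ← hsq,
      L.map_comp, L.map_comp, Category.assoc, hf]

lemma map_eq_zero [HasZeroMorphisms A] [HasZeroMorphisms B] {R : ObjectProperty A}
    (hW : RightOreOn W R.leftOrthogonal) (L : A ⥤ B) [L.IsLocalization W]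
    [L.PreservesZeroMorphisms] {X Y : A} (hX : R.leftOrthogonal X) (hY : R Y)
    (φ : L.obj X ⟶ L.obj Y) : φ = 0 := by
  obtain ⟨X', s, f, hX', _, hf⟩ := hW.exists_map_comp_eq_map L hX φ
  rw [← cancel_epi (L.map s), hf, hX' f hY, L.map_zero, comp_zero]

end RightOreOn

end RelativeOre

lemma rightOreOn_coneIn {P : Set C} {R : ObjectProperty C}
    (hdec : ∀ Z ∈ P, ObjectProperty.extensionProduct
      (fun X ↦ X ∈ P ∧ R.leftOrthogonal (X⟦(-1 : ℤ)⟧)) R Z) :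
    RightOreOn (coneIn P) R.leftOrthogonal := by
  rintro A Y X f t hA ⟨Z, p, q, hT, hZ⟩
  obtain ⟨Z₀, Z₁, u, v, d, hZT, ⟨hZ₀, hZ₀'⟩, hZ₁⟩ := hdec Z hZ
  obtain ⟨a : A ⟶ Z₀, ha : f ≫ p = a ≫ u⟩ := Triangle.coyoneda_exact₂ _ hZT (f ≫ p) (hA _ hZ₁)
  obtain ⟨A', s, e, hs⟩ := distinguished_cocone_triangle₁ a
  have hsfp : (s ≫ f) ≫ p = 0 := by
    have hsa : s ≫ a = 0 := comp_distTriang_mor_zero₁₂ _ hs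
    rw [Category.assoc, ha, reassoc_of% hsa, zero_comp]
  obtain ⟨f', hf'⟩ := Triangle.coyoneda_exact₂ _ hT (s ≫ f) hsfp
  have hA' : R.leftOrthogonal A' :=
    R.leftOrthogonal.ext_of_isTriangulatedClosed₂ _ (inv_rot_of_distTriang _ hs) hZ₀' hA
  exact ⟨A', s, f', hA', ⟨Z₀, a, e, hs, hZ₀⟩, hf'⟩

section Shift

variable {A B : Type*} [Category A] [Category B] [HasShift A ℤ] [HasShift B ℤ]

lemma shift_mem_retractClosure_image (L : A ⥤ B) [L.CommShift ℤ] {S : Set A} {n : ℤ} {X : B}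
    {N : A} (hX : IsRetract X (L.obj N)) (hN : N⟦n⟧ ∈ S) : X⟦n⟧ ∈ retractClosure (L.obj '' S) := by
  obtain ⟨i, r, hir⟩ := hX
  refine ⟨_, ⟨_, hN, rfl⟩, i⟦n⟧' ≫ (L.commShiftIso n).inv.app N,
    (L.commShiftIso n).hom.app N ≫ r⟦n⟧', ?_⟩
  rw [Category.assoc, Iso.inv_hom_id_app_assoc, ← Functor.map_comp, hir,
    CategoryTheory.Functor.map_id]

end Shift

namespace WeightStructure

variable (w : WeightStructure C)

lemma mem_le_neg_sub_one_iff {n : ℤ} {X : C} : X ∈ w.le (-n - 1) ↔ X⟦n + 1⟧ ∈ w.LE := by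
  rw [show n + 1 = -(-n - 1) by ring]
  rfl

lemma mem_ge_neg_iff {n : ℤ} {X : C} : X ∈ w.ge (-n) ↔ X⟦n⟧ ∈ w.GE := by
  conv_rhs => rw [← neg_neg n]
  rfl

lemma leftOrthogonal_ge_one_of_mem_LE {X : C} (hX : X ∈ w.LE) :
    ObjectProperty.leftOrthogonal (· ∈ w.ge 1) X := by
  intro Y f hY
  rw [← cancel_mono (shiftNegShift Y (1 : ℤ)).inv, zero_comp]
  exact w.orthogonal hX hY _

lemma shift_one_mem_ge_one {X : C} (hX : X ∈ w.GE) : X⟦(1 : ℤ)⟧ ∈ w.ge 1 :=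
  w.retract_GE ⟨(shiftShiftNeg X (1 : ℤ)).hom, (shiftShiftNeg X (1 : ℤ)).inv,
    Iso.hom_inv_id _⟩ hX

section Quotient

variable {w} {P : Set C}

lemma rightOreOn_coneIn_ge_one
    (hdec : ∀ Z ∈ P, ObjectProperty.extensionProduct (· ∈ P ∩ w.LE) (· ∈ w.ge 1) Z) :
    RightOreOn (coneIn P) (ObjectProperty.leftOrthogonal (· ∈ w.ge 1)) :=
  rightOreOn_coneIn fun Z hZ ↦ ObjectProperty.monotone_extensionProduct_left _
    (fun _ hX ↦ ⟨hX.1, w.leftOrthogonal_ge_one_of_mem_LE (w.shift_LE hX.2)⟩) Z (hdec Z hZ)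

variable {E : Type*} [Category E] [HasShift E ℤ] (L : C ⥤ E) [L.CommShift ℤ]
  [L.IsLocalization (coneIn P)]

lemma map_orthogonal [HasZeroMorphisms E] [L.PreservesZeroMorphisms]
    (hdec : ∀ Z ∈ P, ObjectProperty.extensionProduct (· ∈ P ∩ w.LE) (· ∈ w.ge 1) Z)
    {A : C} {X : E} (hA : A ∈ w.LE) (hX : X ∈ retractClosure (L.obj '' w.GE))
    (φ : L.obj A ⟶ X⟦(1 : ℤ)⟧) : φ = 0 := by
  obtain ⟨_, ⟨N, hN, rfl⟩, i, r, hir⟩ := hX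
  have hφ : φ ≫ i⟦(1 : ℤ)⟧' ≫ (L.commShiftIso (1 : ℤ)).inv.app N = 0 :=
    (rightOreOn_coneIn_ge_one hdec).map_eq_zero L (w.leftOrthogonal_ge_one_of_mem_LE hA)
      (w.shift_one_mem_ge_one hN) _
  have : Mono i := mono_of_mono_fac hir
  rwa [← cancel_mono (i⟦(1 : ℤ)⟧' ≫ (L.commShiftIso (1 : ℤ)).inv.app N), zero_comp]

lemma map_eq_zero_of_mem_le [Preadditive E] [∀ n : ℤ, (shiftFunctor E n).Additive]
    [L.PreservesZeroMorphisms]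
    (hdec : ∀ Z ∈ P, ObjectProperty.extensionProduct (· ∈ P ∩ w.LE) (· ∈ w.ge 1) Z)
    {n : ℤ} {A : C} {X : E} (hA : A ∈ w.le (-n - 1))
    (hX : X⟦n⟧ ∈ retractClosure (L.obj '' w.GE)) (φ : L.obj A ⟶ X) : φ = 0 := by
  have hφ : (L.commShiftIso (n + 1)).hom.app A ≫ φ⟦n + 1⟧' ≫ (shiftAdd X n 1).hom = 0 :=
    map_orthogonal L hdec (w.mem_le_neg_sub_one_iff.1 hA) hX _
  simpa [Functor.map_eq_zero_iff] using hφ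

variable [Preadditive E] [∀ n : ℤ, (shiftFunctor E n).Additive] [HasZeroObject E]
  [Pretriangulated E] [L.IsTriangulated]

lemma map_eq_zero_and_exists_retraction
    (hdec : ∀ Z ∈ P, ObjectProperty.extensionProduct (· ∈ P ∩ w.LE) (· ∈ w.ge 1) Z)
    {n : ℤ} {A M B : C} {g : A ⟶ M} {h : M ⟶ B}
    {c : B ⟶ A⟦(1 : ℤ)⟧} (hT : Triangle.mk g h c ∈ distTriang C) (hA : A ∈ w.le (-n - 1))
    (hM : (L.obj M)⟦n⟧ ∈ retractClosure (L.obj '' w.GE)) :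
    L.map g = 0 ∧ ∃ r : L.obj B ⟶ L.obj M, L.map h ≫ r = 𝟙 (L.obj M) := by
  have hg : L.map g = 0 := map_eq_zero_of_mem_le L hdec hA hM _
  have : Mono (L.map h) := Triangle.mono₂ _ (L.map_distinguished _ hT) hg
  have : IsSplitMono (L.map h) := isSplitMono_of_mono _
  exact ⟨hg, retraction (L.map h), IsSplitMono.id _⟩

end Quotient

end WeightStructure

theorem statement12_general {E : Type*} [Category E] [HasZeroObject E] [HasShift E ℤ]
    [Preadditive E] [∀ n : ℤ, (shiftFunctor E n).Additive] [Pretriangulated E]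
    (w : WeightStructure C) (P : Set C)
    (hdec : ∀ Z ∈ P, ObjectProperty.extensionProduct (· ∈ P ∩ w.LE) (· ∈ w.ge 1) Z)
    (L : C ⥤ E) [L.CommShift ℤ] [L.IsTriangulated] [L.IsLocalization (coneIn P)]
    (n : ℤ) (M : C) :
    ((L.obj M)⟦n⟧ ∈ retractClosure (L.obj '' w.GE) →
      ∀ (A B : C) (g : A ⟶ M) (h : M ⟶ B) (c : B ⟶ A⟦(1 : ℤ)⟧),
        Triangle.mk g h c ∈ distTriang C → A ∈ w.le (-n - 1) →
          L.map g = 0 ∧ ∃ r : L.obj B ⟶ L.obj M, L.map h ≫ r = 𝟙 (L.obj M)) ∧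
    ((∃ (N : C) (h : M ⟶ N), N ∈ w.ge (-n) ∧
        ∃ r : L.obj N ⟶ L.obj M, L.map h ≫ r = 𝟙 (L.obj M)) →
      (L.obj M)⟦n⟧ ∈ retractClosure (L.obj '' w.GE)) := by
  constructor
  · intro hM A B g h c hT hA
    exact WeightStructure.map_eq_zero_and_exists_retraction L hdec hT hA hM
  · rintro ⟨N, h, hN, r, hr⟩
    exact shift_mem_retractClosure_image L ⟨L.map h, r, hr⟩ (w.mem_ge_neg_iff.1 hN)

/-- let `w` be bounded and restrict to the full triangulated subcategory
`D` (with class of objects `P`); let `L : C ⥤ E` realize the Verdier quotient `C/D`,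
so that `(C/D)_{w≥-n}` is the class of `X` with `X⟦n⟧` in the Karoubi-closure of
`L(C_{w≥0})`.  (1) If `L(M) ∈ (C/D)_{w≥-n}`, then for any shifted weight decomposition
`w_{≤-n-1}M → M → w_{≥-n}M` one has `L(g) = 0` and `L(h)` splits.  (2) Conversely, if
there are `N ∈ C_{w≥-n}` and `h : M ⟶ N` with `L(h)` split, then
`L(M) ∈ (C/D)_{w≥-n}`. -/
theorem statement12 {E : Type*} [Category E] [HasZeroObject E] [HasShift E ℤ]
    [Preadditive E] [∀ n : ℤ, (shiftFunctor E n).Additive] [Pretriangulated E]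
    (w : WeightStructure C) (hw : w.IsBounded)
    (P : Set C) (hP : IsTriangulatedSub P)
    (hres : IsWeightStructureOn P (P ∩ w.LE) (P ∩ w.GE))
    (L : C ⥤ E) [L.CommShift ℤ] [L.IsTriangulated] [L.IsLocalization (coneIn P)]
    (n : ℤ) (M : C) :
    (((L.obj M)⟦n⟧ ∈ retractClosure (L.obj '' w.GE)) →
      ∀ (A B : C) (g : A ⟶ M) (h : M ⟶ B) (c : B ⟶ A⟦(1 : ℤ)⟧),
        Triangle.mk g h c ∈ (distTriang C) → A ∈ w.le (-n - 1) → B ∈ w.ge (-n) →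
        (L.map g = 0 ∧ ∃ r : L.obj B ⟶ L.obj M, L.map h ≫ r = 𝟙 (L.obj M))) ∧
    ((∃ (N : C) (h : M ⟶ N), N ∈ w.ge (-n) ∧
        ∃ r : L.obj N ⟶ L.obj M, L.map h ≫ r = 𝟙 (L.obj M)) →
      (L.obj M)⟦n⟧ ∈ retractClosure (L.obj '' w.GE)) := by
  obtain ⟨split, mem⟩ := statement12_general w P (fun Z hZ ↦
    ObjectProperty.monotone_extensionProduct_right _ (fun _ hY ↦ hY.2) Z (hres.decomp Z hZ)) L n M
  exact ⟨fun hM A B g h c hT hA _ ↦ split hM A B g h c hT hA, mem⟩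

end CWH
end

section
/- Let w be a bounded weight structure on a triangulated category C and let M be an object of C. If some weight complex t(M) of M is isomorphic to the zero complex in the homotopy category K(Hw) (i.e., t(M) is contractible), then M = 0. -/
/-!
Orthogonality controls both ends: if `M ∈ C_{w≥m}`, then `ι l : w_{≤l}M ⟶ M` vanishes for `l < m`,
while if `M ∈ C_{w≤n}`, then `M ⟶ w_{≥n+1}M` vanishes, so `ι n` is a split epimorphism.
It remains to move the vanishing of `ι` up the tower, and this is what a contraction `s` of the
weight complex does. If `ι l = 0`, then `ι (l + 1)` factors through `M^{-l-1}[l+1]`, whose identity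
is `s ≫ d + d ≫ s`. The summand `d ≫ s` is killed by `w_{≤l+1}M ⟶ M^{-l-1}[l+1]`, and the summand
`s ≫ d` is killed because `ι (l + 1)` extends one step further, to `w_{≤l+2}M`. Thus `ι n = 0` is a
split epimorphism onto `M`.
-/

open CategoryTheory CategoryTheory.Limits CategoryTheory.Pretriangulated

namespace CWH

variable (C : Type*) [Category C] [HasZeroObject C] [HasShift C ℤ]
  [Preadditive C] [∀ n : ℤ, (shiftFunctor C n).Additive] [Pretriangulated C]

variable {C}

namespace WeightStructure

variable (w : WeightStructure C)

lemma ge_antitone : Antitone w.ge := by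
  refine antitone_int_of_succ_le fun i X hX => ?_
  let e : X⟦-i⟧ ≅ X⟦-(i + 1)⟧⟦(1 : ℤ)⟧ :=
    (shiftFunctorAdd' C (-(i + 1)) 1 (-i) (by lia)).app X
  exact w.retract_GE ⟨e.hom, e.inv, e.hom_inv_id⟩ (w.shift_GE hX)

variable {w}

lemma eq_zero_of_mem_le_of_mem_ge {X Y : C} {i j : ℤ} (hij : i < j) (hX : X ∈ w.le i)
    (hY : Y ∈ w.ge j) (f : X ⟶ Y) : f = 0 := by
  let e : Y⟦-i⟧ ≅ Y⟦-(i + 1)⟧⟦(1 : ℤ)⟧ :=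
    (shiftFunctorAdd' C (-(i + 1)) 1 (-i) (by lia)).app Y
  have hfe : f⟦-i⟧' ≫ e.hom = 0 := w.orthogonal hX (w.ge_antitone hij hY) _
  apply (shiftFunctor C (-i)).map_injective
  rw [Functor.map_zero, ← cancel_mono e.hom, hfe, zero_comp]

end WeightStructure

namespace WeightPostnikovTower

variable {w : WeightStructure C} {M : C} (T : WeightPostnikovTower w M)

/-- The weight complex `t(M)` given by the tower is contractible: its identity is chain homotopic
to zero. -/
def IsContractible : Prop :=
  ChainHomotopicDown T.termAt T.termAt (towerD T) (towerD T) (fun l => 𝟙 (T.termAt l)) (fun _ => 0)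

lemma exists_section_ι {n : ℤ} (hM : M ∈ w.le n) : ∃ r : M ⟶ T.trunc n, r ≫ T.ι n = 𝟙 M := by
  have hπ : T.coneπ n = 0 :=
    WeightStructure.eq_zero_of_mem_le_of_mem_ge (lt_add_one n) hM (T.cone_mem n) _
  obtain ⟨r, hr⟩ := Triangle.coyoneda_exact₂ _ (T.trunc_dist n) (𝟙 M)
    ((Category.id_comp _).trans hπ)
  exact ⟨r, hr.symm⟩

lemma shiftFunctorAdd'_hom_app_comp_towerD (l : ℤ) :
    (shiftFunctorAdd' C l 1 (l + 1) rfl).hom.app (T.termAt (l + 1)) ≫ (towerD T l)⟦l⟧'⟦(1 : ℤ)⟧' =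
      T.sδ l ≫ (T.sπ l)⟦(1 : ℤ)⟧' :=
  (NatTrans.naturality _ _).symm.trans (T.bd_eq l)

lemma sπ_comp_towerD (l : ℤ) : T.sπ (l + 1) ≫ (towerD T l)⟦l + 1⟧' = 0 := by
  have sπ_comp_sδ : T.sπ (l + 1) ≫ T.sδ l = 0 := comp_distTriang_mor_zero₂₃ _ (T.step_dist l)
  rw [← cancel_mono ((shiftFunctorAdd' C l 1 (l + 1) rfl).hom.app (T.termAt l)), Category.assoc,
    towerD, T.bd_eq, reassoc_of% sπ_comp_sδ, zero_comp, zero_comp]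

variable {T}

lemma towerD_comp_eq_zero {l : ℤ} {Y : C} {g : (T.termAt l)⟦l⟧ ⟶ Y} {f : T.trunc (l + 1) ⟶ Y}
    (hgf : T.sπ l ≫ g = T.step l ≫ f) : (towerD T l)⟦l⟧' ≫ g = 0 := by
  have sδ_comp_step : T.sδ l ≫ (T.step l)⟦(1 : ℤ)⟧' = 0 :=
    comp_distTriang_mor_zero₃₁ _ (T.step_dist l)
  apply (shiftFunctor C (1 : ℤ)).map_injective
  rw [← cancel_epi ((shiftFunctorAdd' C l 1 (l + 1) rfl).hom.app (T.termAt (l + 1))),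
    Functor.map_zero, comp_zero]
  calc _ ≫ ((towerD T l)⟦l⟧' ≫ g)⟦(1 : ℤ)⟧'
    _ = T.sδ l ≫ (T.sπ l ≫ g)⟦(1 : ℤ)⟧' := by
      simp only [Functor.map_comp, reassoc_of% T.shiftFunctorAdd'_hom_app_comp_towerD l]
    _ = 0 := by rw [hgf, Functor.map_comp, reassoc_of% sδ_comp_step, zero_comp]

namespace IsContractible

lemma step_comp_eq_zero (h : T.IsContractible) {l : ℤ} {Y : C} (f : T.trunc (l + 1 + 1) ⟶ Y)
    (hf : T.step l ≫ T.step (l + 1) ≫ f = 0) : T.step (l + 1) ≫ f = 0 := by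
  obtain ⟨s, hs⟩ := h
  obtain ⟨g, hg⟩ : ∃ g : (T.termAt (l + 1))⟦l + 1⟧ ⟶ Y, T.step (l + 1) ≫ f = T.sπ (l + 1) ≫ g :=
    Triangle.yoneda_exact₂ _ (T.step_dist l) _ hf
  have id_eq : 𝟙 (T.termAt (l + 1)) = s (l + 1) ≫ towerD T (l + 1) + towerD T l ≫ s l := by
    rw [← hs l, sub_zero]
  calc T.step (l + 1) ≫ f
    _ = T.sπ (l + 1) ≫ (𝟙 (T.termAt (l + 1)))⟦l + 1⟧' ≫ g := by
      rw [hg, CategoryTheory.Functor.map_id, Category.id_comp]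
    _ = T.sπ (l + 1) ≫ (s (l + 1))⟦l + 1⟧' ≫ (towerD T (l + 1))⟦l + 1⟧' ≫ g +
        T.sπ (l + 1) ≫ (towerD T l)⟦l + 1⟧' ≫ (s l)⟦l + 1⟧' ≫ g := by
      simp only [id_eq, Functor.map_add, Functor.map_comp, Preadditive.add_comp,
        Preadditive.comp_add, Category.assoc]
    _ = 0 := by
      rw [towerD_comp_eq_zero hg.symm, reassoc_of% T.sπ_comp_towerD l]
      simp only [comp_zero, zero_comp, add_zero]

lemma ι_succ_eq_zero (h : T.IsContractible) {l : ℤ} (hl : T.ι l = 0) : T.ι (l + 1) = 0 := by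
  rw [← T.step_ι (l + 1)]
  apply h.step_comp_eq_zero
  rw [T.step_ι, T.step_ι, hl]

lemma ι_eq_zero (h : T.IsContractible) {m : ℤ} (hM : M ∈ w.ge m) (l : ℤ) : T.ι l = 0 := by
  obtain ⟨k, hkm, hkl⟩ : ∃ k < m, k ≤ l := ⟨min (m - 1) l, by lia, by lia⟩
  induction l, hkl using Int.leInduction with
  | base => exact WeightStructure.eq_zero_of_mem_le_of_mem_ge hkm (T.trunc_mem k) hM _
  | succ l _ ih => exact h.ι_succ_eq_zero ih

end IsContractible

end WeightPostnikovTower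

theorem statement14_general {w : WeightStructure C} {M : C} {T : WeightPostnikovTower w M}
    (h : T.IsContractible) {m n : ℤ} (hge : M ∈ w.ge m) (hle : M ∈ w.le n) : IsZero M := by
  obtain ⟨r, hr⟩ := T.exists_section_ι hle
  rw [IsZero.iff_id_eq_zero, ← hr, h.ι_eq_zero hge n, comp_zero]

/-- for a bounded weight structure, if a weight complex of `M` is
contractible (the identity is chain homotopic to zero, i.e., `t(M) ≅ 0` in `K(Hw)`),
then `M = 0`. -/
theorem statement14 (w : WeightStructure C) (hw : w.IsBounded) (M : C)
    (T : WeightPostnikovTower w M)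
    (h : ChainHomotopicDown T.termAt T.termAt (towerD T) (towerD T)
      (fun l => 𝟙 (T.termAt l)) (fun _ => 0)) :
    IsZero M := by
  obtain ⟨⟨_, hle⟩, _, hge⟩ := hw M
  exact statement14_general h hge hle

end CWH
end

section
/- Let w be a weight structure on a triangulated category C, let M be an object of C, and let a ≤ b be integers. Suppose a weight Postnikov tower for M is chosen such that w_{≤i}M = 0 for all i < a and the structure morphism w_{≤b}M → M is an isomorphism, and let (M^i) be the associated weight complex. Then M belongs to the extension-closure in C of the set {M^{−i}[i] : a ≤ i ≤ b}. -/
/-!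
The triangles `w_{≤l}M → w_{≤l+1}M → M^{-l-1}[l+1]` exhibit each truncation as an extension of a
shifted term of the weight complex by the previous truncation, so the truncations stay in the
extension-closure all the way up from `w_{≤a-1}M = 0` to `w_{≤b}M ≅ M`.
-/

open CategoryTheory CategoryTheory.Limits CategoryTheory.Pretriangulated

namespace CWH

variable (C : Type*) [Category C] [HasZeroObject C] [HasShift C ℤ]
  [Preadditive C] [∀ n : ℤ, (shiftFunctor C n).Additive] [Pretriangulated C]

variable {C}

namespace ExtClosure

variable {S : Set C}

theorem of_iso {X Y : C} (e : X ≅ Y) (hX : ExtClosure S X) : ExtClosure S Y := by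
  obtain ⟨Z, g, h, hT⟩ := distinguished_cocone_triangle e.hom
  have hZ : IsZero Z := Triangle.isZero₃_of_isIso₁ _ hT e.isIso_hom
  exact .ext e.hom g h hT hX (.zero Z hZ)

theorem of_tower {X Y : ℤ → C} {f : ∀ l, X l ⟶ X (l + 1)} {g : ∀ l, X (l + 1) ⟶ Y (l + 1)}
    {h : ∀ l, Y (l + 1) ⟶ (X l)⟦(1 : ℤ)⟧} {m n : ℤ} (hmn : m ≤ n)
    (hT : ∀ l, m ≤ l → l < n → Triangle.mk (f l) (g l) (h l) ∈ distTriang C)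
    (hX : ExtClosure S (X m)) (hY : ∀ l, m < l → l ≤ n → ExtClosure S (Y l)) :
    ExtClosure S (X n) := by
  induction n, hmn using Int.leInduction with
  | base => exact hX
  | succ l hml ih =>
    have hXl : ExtClosure S (X l) :=
      ih (fun k hmk hkl => hT k hmk (by lia)) (fun k hmk hkl => hY k hmk (by lia))
    exact .ext _ _ _ (hT l hml (by lia)) hXl (hY (l + 1) (by lia) le_rfl)

end ExtClosure

theorem statement15_general {X Y : ℤ → C} {f : ∀ l, X l ⟶ X (l + 1)}
    {g : ∀ l, X (l + 1) ⟶ Y (l + 1)} {h : ∀ l, Y (l + 1) ⟶ (X l)⟦(1 : ℤ)⟧} {M : C} {a b : ℤ}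
    (hab : a - 1 ≤ b)
    (hT : ∀ l, a - 1 ≤ l → l < b → Triangle.mk (f l) (g l) (h l) ∈ distTriang C)
    (hX : IsZero (X (a - 1))) (e : X b ≅ M) :
    ExtClosure {Z : C | ∃ i : ℤ, a ≤ i ∧ i ≤ b ∧ Z = Y i} M := by
  refine .of_iso e (.of_tower hab hT (.zero _ hX) fun l hal hlb => ?_)
  exact .of _ ⟨l, by lia, hlb, rfl⟩

/-- if a weight Postnikov tower for `M` satisfies `w_{≤i}M = 0` for
`i < a` and `w_{≤b}M ≅ M`, then `M` belongs to the extension-closure of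
`{M^{-i}[i] : a ≤ i ≤ b}` (recall `termAt i = M^{-i}`). -/
theorem statement15 (w : WeightStructure C) (M : C) (a b : ℤ) (hab : a ≤ b)
    (T : WeightPostnikovTower w M)
    (h1 : ∀ i : ℤ, i < a → IsZero (T.trunc i))
    (h2 : IsIso (T.ι b)) :
    ExtClosure {X : C | ∃ i : ℤ, a ≤ i ∧ i ≤ b ∧ X = (T.termAt i)⟦i⟧} M := by
  exact statement15_general (Y := fun i => (T.termAt i)⟦i⟧) (by lia) (fun l _ _ => T.step_dist l)
    (h1 (a - 1) (by lia)) (asIso (T.ι b))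

end CWH
end

section
/- Let w be a weight structure on a triangulated category C, let N ∈ C_{w=0} and M ∈ C_{w≥0}, and let f : N → M be a morphism that factors through some object L of C. Then for any choice of weight Postnikov tower for L with associated weight complex (L^i), the morphism f factors through the zeroth term L^0: there exist morphisms u : N → L^0 and v : L^0 → M with f = v ∘ u. -/
/-!
By orthogonality every morphism from an object of `C_{w≤l}` to `L` vanishes on `w_{≥l+1}L`, hence
lifts to `w_{≤l}L`, and every morphism from `w_{≤l}L` to an object of `C_{w≥l}` vanishes on
`w_{≤l-1}L`, hence extends to `L^{-l}[l]`. For `l = 0` a composite `N ⟶ L ⟶ M` therefore equals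
`N ⟶ w_{≤0}L ⟶ L^0 ⟶ M`.
-/

open CategoryTheory CategoryTheory.Limits CategoryTheory.Pretriangulated

namespace CWH

variable (C : Type*) [Category C] [HasZeroObject C] [HasShift C ℤ]
  [Preadditive C] [∀ n : ℤ, (shiftFunctor C n).Additive] [Pretriangulated C]

variable {C}

theorem IsRetract.of_iso {D : Type*} [Category D] {X Y : D} (e : X ≅ Y) : IsRetract X Y :=
  ⟨e.hom, e.inv, e.hom_inv_id⟩

namespace WeightStructure

variable (w : WeightStructure C)

theorem le_zero : w.le 0 = w.LE := by
  ext X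
  let e : X⟦(-0 : ℤ)⟧ ≅ X := (shiftFunctorZero' C (-0 : ℤ) neg_zero).app X
  exact ⟨w.retract_LE (.of_iso e.symm), w.retract_LE (.of_iso e)⟩

theorem ge_zero : w.ge 0 = w.GE := by
  ext X
  let e : X⟦(-0 : ℤ)⟧ ≅ X := (shiftFunctorZero' C (-0 : ℤ) neg_zero).app X
  exact ⟨w.retract_GE (.of_iso e.symm), w.retract_GE (.of_iso e)⟩

variable {w}

theorem hom_eq_zero_of_mem_le_of_mem_ge_add_one {l : ℤ} {X Y : C} (hX : X ∈ w.le l)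
    (hY : Y ∈ w.ge (l + 1)) (f : X ⟶ Y) : f = 0 := by
  let e : Y⟦-l⟧ ≅ Y⟦-(l + 1)⟧⟦(1 : ℤ)⟧ :=
    (shiftFunctorAdd' C (-(l + 1)) 1 (-l) (by lia)).app Y
  have h : f⟦-l⟧' ≫ e.hom = 0 := w.orthogonal hX hY _
  rwa [Preadditive.IsIso.comp_right_eq_zero, Functor.map_eq_zero_iff] at h

end WeightStructure

namespace WeightPostnikovTower

variable {w : WeightStructure C} {L N M : C} (T : WeightPostnikovTower w L)

theorem exists_lift_trunc {l : ℤ} (hN : N ∈ w.le l) (a : N ⟶ L) :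
    ∃ a' : N ⟶ T.trunc l, a' ≫ T.ι l = a := by
  have ha : a ≫ T.coneπ l = 0 :=
    WeightStructure.hom_eq_zero_of_mem_le_of_mem_ge_add_one hN (T.cone_mem l) _
  obtain ⟨a', ha'⟩ := Triangle.coyoneda_exact₂ _ (T.trunc_dist l) a ha
  exact ⟨a', ha'.symm⟩

theorem exists_desc_termAt_shift {l : ℤ} (hM : M ∈ w.ge l) (b : T.trunc l ⟶ M) :
    ∃ v : (T.termAt l)⟦l⟧ ⟶ M, T.sπ l ≫ v = b := by
  obtain ⟨k, rfl⟩ : ∃ k, l = k + 1 := ⟨l - 1, by lia⟩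
  have hb : T.step k ≫ b = 0 :=
    WeightStructure.hom_eq_zero_of_mem_le_of_mem_ge_add_one (T.trunc_mem k) hM _
  obtain ⟨v, hv⟩ := Triangle.yoneda_exact₂ _ (T.step_dist k) b hb
  exact ⟨v, hv.symm⟩

theorem exists_fac_termAt_shift {l : ℤ} (hN : N ∈ w.le l) (hM : M ∈ w.ge l)
    (a : N ⟶ L) (b : L ⟶ M) :
    ∃ (u : N ⟶ (T.termAt l)⟦l⟧) (v : (T.termAt l)⟦l⟧ ⟶ M), u ≫ v = a ≫ b := by
  obtain ⟨a', ha'⟩ := T.exists_lift_trunc hN a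
  obtain ⟨v, hv⟩ := T.exists_desc_termAt_shift hM (T.ι l ≫ b)
  exact ⟨a' ≫ T.sπ l, v, by rw [Category.assoc, hv, reassoc_of% ha']⟩

end WeightPostnikovTower

theorem statement16_general {w : WeightStructure C} {N M L : C} (hN : N ∈ w.LE) (hM : M ∈ w.GE)
    (a : N ⟶ L) (b : L ⟶ M) (T : WeightPostnikovTower w L) :
    ∃ (u : N ⟶ T.termAt 0) (v : T.termAt 0 ⟶ M), u ≫ v = a ≫ b := by
  rw [← w.le_zero] at hN
  rw [← w.ge_zero] at hM
  obtain ⟨u, v, huv⟩ := T.exists_fac_termAt_shift hN hM a b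
  let e : (T.termAt 0)⟦(0 : ℤ)⟧ ≅ T.termAt 0 := (shiftFunctorZero C ℤ).app (T.termAt 0)
  exact ⟨u ≫ e.hom, e.inv ≫ v, by rw [Category.assoc, e.hom_inv_id_assoc, huv]⟩

/-- if `N ∈ C_{w=0}`, `M ∈ C_{w≥0}` and `f : N ⟶ M` factors through an
object `L`, then `f` factors through the zeroth term `L^0 = termAt 0` of any weight
complex of `L`. -/
theorem statement16 (w : WeightStructure C) (N M L : C)
    (hN : N ∈ w.LE ∩ w.GE) (hM : M ∈ w.GE)
    (f : N ⟶ M) (a : N ⟶ L) (b : L ⟶ M) (hf : a ≫ b = f)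
    (T : WeightPostnikovTower w L) :
    ∃ (u : N ⟶ T.termAt 0) (v : T.termAt 0 ⟶ M), u ≫ v = f := by
  subst hf
  exact statement16_general hN.1 hM a b T

end CWH
end
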